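/- The sequence (Qₖ⁻)_{k ≥ 1} is strictly monotone increasing in k, i.e. Qₖ⁻ < Qₖ₊₁⁻ for all k ≥ 1. -/

import Mathlib

/-!
The proof compares `P(|Sₘ| < j)` with `P(|Sₙ| < j + 1)`, where `m ≡ j` is the largest integer of
that parity with `m < j² / ξ²`, `n ≡ j + 1` the largest with `n < (j + 1)² / ξ²`, and `j = k + 1`;
these are the two probabilities in the statement, because `Sₘ ≡ m` and `Sₙ ≡ n` modulo 2.

Write `p_N(j) = P(S_N = j)`. Going from `(m, j - 2)` to `(m + 1, j - 1)` raises the probability by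
`p_m(j)`, and each further step from `N - 1` to `N + 1` at fixed threshold `j - 1` lowers it by
`(j / N) p_N(j)` (`P_up`, `P_down`, `prEq_A`). Since `p_{N+2}(j) / p_N(j) = (r² - r) / (r² - j²)`
with `r = N + 2`, the values `p_N(j)` do not increase once `N + 2 ≥ j²`; this is where `ξ ≤ 1`
enters. With `M = m + 2` and `n = m + 1 + 2 L` it therefore suffices that
`∑_{l < L} j / (M + 2 l) < 1`. The sum is at most `(j / 2) log ((M + 2 L - 1) / (M - 1))`
(`sum_le_log`), and `(M + 2 L - 1) / (M - 1)` is below `exp (2 / j)` already by the cubic Taylor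
polynomial of `exp` (`arith_bound`), given `M ≥ j²` and `n < (j + 1)² / ξ² ≤ M (j + 1)² / j²`.
-/

/-- Probability of an event under the uniform distribution on sign vectors
`{-1,1}^n` (encoded as `Fin n → Bool`), which is the joint law of `n`
independent Rademacher random variables. -/
noncomputable def pr (n : ℕ) (E : (Fin n → Bool) → Prop) : ℝ :=
  letI := Classical.decPred E
  ((Finset.univ.filter E).card : ℝ) / 2 ^ n

/-- `S n ε = ε₁ + ⋯ + εₙ`, the sum of `n` Rademacher variables. -/
def S (n : ℕ) (ε : Fin n → Bool) : ℤ := ∑ i, if ε i then 1 else -1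

/-- `P n k = P(|Sₙ| ≤ k)` (with an integer threshold, so `P n (-1) = 0`). -/
noncomputable def P (n : ℕ) (k : ℤ) : ℝ := pr n fun ε => |S n ε| ≤ k

/-- `prEq n j = P(Sₙ = j)`. -/
noncomputable def prEq (n : ℕ) (j : ℤ) : ℝ := pr n fun ε => S n ε = j

/-- `Pxi ξ n = P(|Sₙ| ≤ ξ·√n)`. -/
noncomputable def Pxi (ξ : ℝ) (n : ℕ) : ℝ :=
  pr n fun ε => (|S n ε| : ℝ) ≤ ξ * Real.sqrt n

/-- `nseq ξ k = nₖ = 2·⌈(k²/ξ² + k)/2⌉ − k − 1`. -/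
noncomputable def nseq (ξ : ℝ) (k : ℕ) : ℤ :=
  2 * ⌈((k : ℝ) ^ 2 / ξ ^ 2 + (k : ℝ)) / 2⌉ - k - 1

section Rademacher

/-! ### Law of the random walk -/

lemma pr_congr {n : ℕ} {E F : (Fin n → Bool) → Prop} (h : ∀ ε, E ε ↔ F ε) : pr n E = pr n F := by
  have : E = F := funext fun ε => propext (h ε)
  rw [this]

lemma pr_nonneg (n : ℕ) (E : (Fin n → Bool) → Prop) : 0 ≤ pr n E := by
  unfold pr; positivity

lemma pr_or {n : ℕ} {E F G : (Fin n → Bool) → Prop} (h : ∀ ε, G ε ↔ (E ε ∨ F ε))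
    (hd : ∀ ε, E ε → ¬ F ε) : pr n G = pr n E + pr n F := by
  classical
  rw [pr_congr h]
  unfold pr
  rw [← add_div, ← Nat.cast_add, ← Finset.card_union_of_disjoint]
  · congr 3
    ext ε
    simp
  · rw [Finset.disjoint_left]
    intro ε h1 h2
    simp only [Finset.mem_filter, Finset.mem_univ, true_and] at h1 h2
    exact hd ε h1 h2

lemma S_cons (n : ℕ) (b : Bool) (ε : Fin n → Bool) :
    S (n + 1) (Fin.cons b ε : Fin (n + 1) → Bool) = (if b then 1 else -1) + S n ε := by
  simp [S, Fin.sum_univ_succ]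

/-- Conditioning on the first sign. -/
lemma pr_succ (n : ℕ) (E : (Fin (n + 1) → Bool) → Prop) :
    pr (n + 1) E = (pr n (fun ε => E (Fin.cons true ε)) + pr n (fun ε => E (Fin.cons false ε))) / 2
    := by
  classical
  unfold pr
  simp only [Finset.card_filter]
  push_cast
  rw [← (Fin.consEquiv (fun _ : Fin (n + 1) => Bool)).sum_comp, Fintype.sum_prod_type]
  simp only [Fintype.univ_bool, Finset.mem_singleton, Bool.true_eq_false,
    not_false_eq_true, Finset.sum_insert, Finset.sum_singleton]
  rw [pow_succ]
  field_simp
  rfl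

lemma S_parity (n : ℕ) (ε : Fin n → Bool) : ∃ t : ℤ, S n ε = n + 2 * t := by
  induction n with
  | zero => exact ⟨0, by simp [S]⟩
  | succ n ih =>
    obtain ⟨b, δ, rfl⟩ : ∃ b δ, ε = Fin.cons b δ := ⟨ε 0, Fin.tail ε, (Fin.cons_self_tail ε).symm⟩
    obtain ⟨t, ht⟩ := ih δ
    rw [S_cons, ht]
    cases b
    · exact ⟨t - 1, by simp only [Bool.false_eq_true, if_false]; push_cast; ring⟩
    · exact ⟨t, by simp only [if_true]; push_cast; ring⟩

lemma prEq_succ (n : ℕ) (j : ℤ) :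
    prEq (n + 1) j = (prEq n (j - 1) + prEq n (j + 1)) / 2 := by
  unfold prEq
  rw [pr_succ]
  congr 2 <;> apply pr_congr <;> intro ε <;> rw [S_cons] <;> simp <;> omega

lemma prEq_zero (j : ℤ) : prEq 0 j = if j = 0 then 1 else 0 := by
  classical
  unfold prEq pr
  by_cases h : j = 0
  · simp [S, h]
  · simp [S, h, Ne.symm h]

lemma prEq_symm (n : ℕ) (j : ℤ) : prEq n (-j) = prEq n j := by
  induction n generalizing j with
  | zero => simp [prEq_zero]
  | succ n ih =>
    rw [prEq_succ, prEq_succ, ← ih (j - 1), ← ih (j + 1), add_comm]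
    congr 3 <;> ring

/-- The ratio `p_n(j - 1) / p_{n+1}(j)`, obtained from Pascal's rule alone. -/
lemma prEq_A (n : ℕ) (j : ℤ) : ((n : ℝ) + 1) * prEq n (j - 1) = (n + 1 + j) * prEq (n + 1) j := by
  induction n generalizing j with
  | zero =>
    rw [prEq_succ]
    simp only [prEq_zero]
    by_cases h1 : j = 1
    · subst h1; norm_num
    · by_cases h2 : j = -1
      · subst h2; norm_num
      · have e1 : j - 1 ≠ 0 := by omega
        have e2 : j + 1 ≠ 0 := by omega
        simp [e1, e2]
  | succ n ih =>
    have a1 := ih (j + 1)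
    have a2 := ih (j - 1)
    have b2 := prEq_succ n (j - 1)
    have c := prEq_succ (n + 1) j
    rw [show j + 1 - 1 = j by ring] at a1
    rw [show j - 1 + 1 = j by ring] at b2
    push_cast at *
    rw [c]
    linear_combination (1 / 2) * a1 + (1 / 2) * a2 + (n + 1 : ℝ) * b2

lemma prEq_B (n : ℕ) (j : ℤ) : ((n : ℝ) + 1) * prEq n (j + 1) = (n + 1 - j) * prEq (n + 1) j := by
  have a := prEq_A n j
  have b := prEq_succ n j
  linear_combination -a - 2 * (n + 1 : ℝ) * b

lemma prEq_two (n : ℕ) (j : ℤ) :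
    (((n : ℝ) + 2) ^ 2 - j ^ 2) * prEq (n + 2) j = (n + 2) * (n + 1) * prEq n j := by
  have a := prEq_A n (j + 1)
  have b := prEq_B (n + 1) j
  rw [show j + 1 - 1 = j by ring] at a
  push_cast at *
  rw [show n + 1 + 1 = n + 2 by ring] at b
  linear_combination -((n : ℝ) + 2) * a - ((n : ℝ) + 2 + j) * b

lemma prEq_pos (n : ℕ) (j : ℤ) (h1 : -n ≤ j) (h2 : j ≤ n) (h3 : ∃ t : ℤ, j = n + 2 * t) :
    0 < prEq n j := by
  induction n generalizing j with
  | zero =>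
    have : j = 0 := by push_cast at *; omega
    simp [prEq_zero, this]
  | succ n ih =>
    obtain ⟨t, ht⟩ := h3
    push_cast at *
    rw [prEq_succ]
    have p1 : 0 ≤ prEq n (j - 1) := pr_nonneg _ _
    have p2 : 0 ≤ prEq n (j + 1) := pr_nonneg _ _
    by_cases h : j = -(n + 1)
    · have := ih (j + 1) (by omega) (by omega) ⟨t + 1, by omega⟩
      linarith
    · have := ih (j - 1) (by omega) (by omega) ⟨t, by omega⟩
      linarith

/-! ### Changing the number of signs by one -/

lemma P_up (n : ℕ) (i : ℤ) (hi : 0 ≤ i) (hp : ∃ t : ℤ, i = n + 2 * t) :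
    P (n + 1) (i + 1) = P n i + prEq n (i + 2) := by
  obtain ⟨t, ht⟩ := hp
  have e1 : pr n (fun ε => |S (n + 1) (Fin.cons true ε : Fin (n + 1) → Bool)| ≤ i + 1)
      = P n i + prEq n (-(i + 2)) := by
    apply pr_or
    · intro ε
      obtain ⟨s, hs⟩ := S_parity n ε
      rw [S_cons]
      simp only [if_true, abs_le]
      omega
    · intro ε
      simp only [abs_le]
      omega
  have e2 : pr n (fun ε => |S (n + 1) (Fin.cons false ε : Fin (n + 1) → Bool)| ≤ i + 1)
      = P n i + prEq n (i + 2) := by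
    apply pr_or
    · intro ε
      obtain ⟨s, hs⟩ := S_parity n ε
      rw [S_cons]
      simp only [Bool.false_eq_true, if_false, abs_le]
      omega
    · intro ε
      simp only [abs_le]
      omega
  rw [P, pr_succ, e1, e2, prEq_symm]
  ring

lemma P_down (n : ℕ) (i : ℤ) (hi : 0 ≤ i) (hp : ∃ t : ℤ, i = n + 2 * t) :
    P (n + 1) (i - 1) = P n i - prEq n i := by
  obtain ⟨t, ht⟩ := hp
  have e1 : P n i = pr n (fun ε => |S (n + 1) (Fin.cons true ε : Fin (n + 1) → Bool)| ≤ i - 1)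
      + prEq n i := by
    apply pr_or
    · intro ε
      obtain ⟨s, hs⟩ := S_parity n ε
      rw [S_cons]
      simp only [if_true, abs_le]
      omega
    · intro ε
      rw [S_cons]
      simp only [if_true, abs_le]
      omega
  have e2 : P n i = pr n (fun ε => |S (n + 1) (Fin.cons false ε : Fin (n + 1) → Bool)| ≤ i - 1)
      + prEq n (-i) := by
    apply pr_or
    · intro ε
      obtain ⟨s, hs⟩ := S_parity n ε
      rw [S_cons]
      simp only [Bool.false_eq_true, if_false, abs_le]
      omega
    · intro ε
      rw [S_cons]
      simp only [Bool.false_eq_true, if_false, abs_le]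
      omega
  rw [prEq_symm] at e2
  rw [P, pr_succ]
  linarith

/-- With `r = N + 2`, the ratio `(r² - r) / (r² - j²)` of `prEq_two` is at most `1` iff `r ≥ j²`. -/
lemma prEq_le (m : ℕ) (j : ℤ) (hj : 2 ≤ j) (hm : j ^ 2 ≤ m + 2) (l : ℕ) :
    prEq (m + 2 * l) j ≤ prEq m j := by
  induction l with
  | zero => simp
  | succ l ih =>
    refine le_trans ?_ ih
    have h := prEq_two (m + 2 * l) j
    rw [show m + 2 * (l + 1) = m + 2 * l + 2 by ring]
    have hr : ((j : ℝ)) ^ 2 ≤ ((m + 2 * l : ℕ) : ℝ) + 2 := by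
      have : ((j ^ 2 : ℤ) : ℝ) ≤ ((m + 2 : ℤ) : ℝ) := by exact_mod_cast hm
      push_cast at *
      have : (0 : ℝ) ≤ l := by positivity
      linarith
    have hj' : (2 : ℝ) ≤ j := by exact_mod_cast hj
    set r : ℝ := ((m + 2 * l : ℕ) : ℝ) + 2 with hrdef
    have hpos : 0 < r ^ 2 - (j : ℝ) ^ 2 := by nlinarith
    have hp : 0 ≤ prEq (m + 2 * l) j := pr_nonneg _ _
    have : (r ^ 2 - (j : ℝ) ^ 2) * prEq (m + 2 * l + 2) j
        ≤ (r ^ 2 - (j : ℝ) ^ 2) * prEq (m + 2 * l) j := by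
      rw [h, show ((m + 2 * l : ℕ) : ℝ) + 1 = r - 1 by rw [hrdef]; ring]
      exact mul_le_mul_of_nonneg_right (by nlinarith) hp
    exact le_of_mul_le_mul_left this hpos

/-- Total change of the probability over one step up and `L` double steps, with every
`p_{m+2l}(j)` replaced by its upper bound `p_m(j)`. -/
lemma P_lower (m : ℕ) (j : ℤ) (hj : 2 ≤ j) (hm : j ^ 2 ≤ m + 2) (hp : ∃ t : ℤ, j = m + 2 * t)
    (L : ℕ) :
    P m (j - 2) + prEq m j * (1 - ∑ l ∈ Finset.range L, (j : ℝ) / ((m : ℝ) + 2 + 2 * l))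
      ≤ P (m + 1 + 2 * L) (j - 1) := by
  obtain ⟨t, ht⟩ := hp
  induction L with
  | zero =>
    have := P_up m (j - 2) (by omega) ⟨t - 1, by omega⟩
    rw [show j - 2 + 1 = j - 1 by ring, show j - 2 + 2 = j by ring] at this
    simp [this]
  | succ L ih =>
    have hd := P_down (m + 1 + 2 * L) (j - 1) (by omega) ⟨t - 1 - L, by push_cast; omega⟩
    have hu := P_up (m + 1 + 2 * L + 1) (j - 1 - 1) (by omega) ⟨t - 2 - L, by push_cast; omega⟩
    rw [show j - 1 - 1 + 1 = j - 1 by ring, show j - 1 - 1 + 2 = j by ring] at hu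
    have ha := prEq_A (m + 1 + 2 * L) j
    have hle := prEq_le m j hj hm (L + 1)
    rw [show m + 1 + 2 * (L + 1) = m + 1 + 2 * L + 1 + 1 by ring, hu, hd, Finset.sum_range_succ]
    rw [show m + 2 * (L + 1) = m + 1 + 2 * L + 1 by ring] at hle
    set q := prEq (m + 1 + 2 * L + 1) j
    set r : ℝ := (m : ℝ) + 2 + 2 * L with hr
    have hr0 : 0 < r := by positivity
    have hj' : (2 : ℝ) ≤ j := by exact_mod_cast hj
    have e : prEq (m + 1 + 2 * L) (j - 1) = q + (j : ℝ) / r * q := by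
      have : r * prEq (m + 1 + 2 * L) (j - 1) = (r + j) * q := by
        push_cast at ha
        rw [hr]
        linear_combination ha
      field_simp
      linarith
    rw [e]
    have : (j : ℝ) / r * q ≤ (j : ℝ) / r * prEq m j :=
      mul_le_mul_of_nonneg_left hle (by positivity)
    linarith

/-! ### The harmonic sum -/

/-- The bound `2 / r ≤ log ((r + 1) / (r - 1))`, telescoped over `r = M, M + 2, …`. -/
lemma sum_le_log (M : ℝ) (hM : 1 < M) (L : ℕ) :
    ∑ l ∈ Finset.range L, 2 / (M + 2 * l) ≤ Real.log ((M + 2 * L - 1) / (M - 1)) := by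
  induction L with
  | zero => simp [div_self (by linarith : M - 1 ≠ 0)]
  | succ L ih =>
    rw [Finset.sum_range_succ]
    have hL : (0 : ℝ) ≤ L := by positivity
    have hM0 : 0 < M - 1 := by linarith
    have hA : 0 < M + 2 * L - 1 := by linarith
    have h := Real.le_log_one_add_of_nonneg (x := 2 / (M + 2 * L - 1)) (by positivity)
    have e1 : 2 * (2 / (M + 2 * L - 1)) / (2 / (M + 2 * L - 1) + 2) = 2 / (M + 2 * L) := by
      have : M + 2 * L ≠ 0 := by linarith
      have h2 : 2 + (M + 2 * L - 1) * 2 ≠ 0 := by linarith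
      field_simp
      ring
    have e2 : (M + 2 * ((L + 1 : ℕ) : ℝ) - 1) / (M - 1)
        = ((M + 2 * L - 1) / (M - 1)) * (1 + 2 / (M + 2 * L - 1)) := by
      push_cast
      field_simp
      ring
    rw [e1] at h
    rw [e2, Real.log_mul (by positivity) (by positivity)]
    linarith

/-- Cleared of denominators: `2 L ≤ (M - 1) (x + x² / 2 + x³ / 6)` with `x = 2 / j`. Below
`M = j² + j` integrality and parity matter, as they force `L ≤ j`, or `L ≤ j + 1` and
`M ≥ j² + 2`. -/
lemma arith_bound (j M L : ℤ) (hj : 2 ≤ j) (hM : j ^ 2 ≤ M) (hp : ∃ t : ℤ, j = M + 2 * t)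
    (h : j ^ 2 * (2 * L + M - 1) < (j + 1) ^ 2 * M) :
    2 * L * (3 * j ^ 3) ≤ (M - 1) * (6 * j ^ 2 + 6 * j + 4) := by
  by_cases hc : j ^ 2 + j ≤ M
  -- The general estimate needs `j² ≥ 2 j + 4`. For `j = 2, 3` it is the integrality of `L` and `M` that helps.
  · by_cases h2 : j = 2
    · subst h2; omega
    by_cases h3 : j = 3
    · subst h3; omega
    have h4 : 4 ≤ j := by omega
    have e : j ^ 2 * (2 * L) ≤ M * (2 * j + 1) + j ^ 2 := by nlinarith
    have e1 : 2 * L * (3 * j ^ 3) ≤ 3 * j * (M * (2 * j + 1) + j ^ 2) := by nlinarith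
    refine e1.trans ?_
    have e2 : (j ^ 2 + j) * (3 * j + 4) ≤ M * (3 * j + 4) :=
      mul_le_mul_of_nonneg_right hc (by omega)
    nlinarith
  · obtain ⟨t, ht⟩ := hp
    obtain ⟨u, hu⟩ : Even (j * (j + 1)) := Int.even_mul_succ_self j
    have hj2 : 0 < j ^ 2 := by positivity
    rcases eq_or_lt_of_le hM with h0 | h0
    · have hL : L ≤ j := by
        by_contra hcon
        have : j + 1 ≤ L := by omega
        nlinarith
      have e : 2 * L * (3 * j ^ 3) ≤ 2 * j * (3 * j ^ 3) :=
        mul_le_mul_of_nonneg_right (by omega) (by positivity)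
      refine e.trans ?_
      rw [← h0]
      nlinarith [mul_nonneg (by omega : 0 ≤ j) (by omega : 0 ≤ j - 2),
        mul_nonneg (mul_nonneg (by omega : 0 ≤ j) (by omega : 0 ≤ j - 2)) (by omega : 0 ≤ j)]
    · have h2 : j ^ 2 + 2 ≤ M := by
        have : j * (j + 1) = j ^ 2 + j := by ring
        omega
      have hL : L ≤ j + 1 := by
        by_contra hcon
        have h5 : j + 2 ≤ L := by omega
        have h6 : j ^ 2 * (2 * (j + 2) - 1) ≤ j ^ 2 * (2 * L - 1) :=
          mul_le_mul_of_nonneg_left (by omega) hj2.le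
        have h7 : (2 * j + 1) * M ≤ (2 * j + 1) * (j ^ 2 + j - 1) :=
          mul_le_mul_of_nonneg_left (by omega) (by omega)
        nlinarith
      have e : 2 * L * (3 * j ^ 3) ≤ 2 * (j + 1) * (3 * j ^ 3) :=
        mul_le_mul_of_nonneg_right (by omega) (by positivity)
      have e3 : (j ^ 2 + 1) * (6 * j ^ 2 + 6 * j + 4) ≤ (M - 1) * (6 * j ^ 2 + 6 * j + 4) :=
        mul_le_mul_of_nonneg_right (by omega) (by positivity)
      refine e.trans (le_trans ?_ e3)
      nlinarith

lemma sum_lt_one (j M L : ℕ) (hj : 2 ≤ j) (hM : j ^ 2 ≤ M) (hp : ∃ t : ℤ, (j : ℤ) = M + 2 * t)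
    (h : (j : ℤ) ^ 2 * (2 * L + M - 1) < (j + 1) ^ 2 * M) :
    ∑ l ∈ Finset.range L, (j : ℝ) / ((M : ℝ) + 2 * l) < 1 := by
  have hb := arith_bound j M L (by exact_mod_cast hj) (by exact_mod_cast hM) hp h
  have hbR : 2 * (L : ℝ) * (3 * (j : ℝ) ^ 3) ≤ ((M : ℝ) - 1) * (6 * (j : ℝ) ^ 2 + 6 * j + 4) := by
    exact_mod_cast hb
  have hjR : (2 : ℝ) ≤ j := by exact_mod_cast hj
  have hMR : (j : ℝ) ^ 2 ≤ M := by exact_mod_cast hM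
  have hM1 : (1 : ℝ) < M := by nlinarith
  have hM0 : (0 : ℝ) < M - 1 := by linarith
  have hj0 : (0 : ℝ) < j := by linarith
  have hs := sum_le_log M hM1 L
  have hlog : Real.log (((M : ℝ) + 2 * L - 1) / (M - 1)) < 2 / j := by
    have hL : (0 : ℝ) ≤ L := by positivity
    rw [Real.log_lt_iff_lt_exp (div_pos (by linarith) hM0)]
    -- The term of degree 4 makes the comparison with the cubic polynomial strict.
    have hexp := Real.sum_le_exp_of_nonneg (x := 2 / (j : ℝ)) (by positivity) 5
    simp only [Finset.sum_range_succ, Finset.sum_range_zero, Nat.factorial] at hexp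
    norm_num at hexp
    have h4 : 0 < (2 / (j : ℝ)) ^ 4 / 24 := by positivity
    have hle : ((M : ℝ) + 2 * L - 1) / (M - 1)
        ≤ 1 + 2 / (j : ℝ) + (2 / (j : ℝ)) ^ 2 / 2 + (2 / (j : ℝ)) ^ 3 / 6 := by
      have e : 1 + 2 / (j : ℝ) + (2 / (j : ℝ)) ^ 2 / 2 + (2 / (j : ℝ)) ^ 3 / 6
          = 1 + (6 * (j : ℝ) ^ 2 + 6 * j + 4) / (3 * (j : ℝ) ^ 3) := by
        field_simp
        ring
      rw [e, show ((M : ℝ) + 2 * L - 1) / (M - 1) = 1 + 2 * L / (M - 1) by field_simp; ring]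
      gcongr 1 + ?_
      rw [div_le_div_iff₀ hM0 (by positivity)]
      linarith
    linarith
  have e : ∑ l ∈ Finset.range L, (j : ℝ) / ((M : ℝ) + 2 * l)
      = (j / 2) * ∑ l ∈ Finset.range L, 2 / ((M : ℝ) + 2 * l) := by
    rw [Finset.mul_sum]
    refine Finset.sum_congr rfl fun l _ => ?_
    field_simp
  rw [e]
  calc (j / 2 : ℝ) * ∑ l ∈ Finset.range L, 2 / ((M : ℝ) + 2 * l)
      < (j / 2) * (2 / j) := mul_lt_mul_of_pos_left (hs.trans_lt hlog) (by positivity)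
    _ = 1 := by field_simp

/-! ### The integers `nₖ` -/

/-- `nₖ + 1` is the least integer of the parity of `k` that is at least `k² / ξ²`. -/
lemma nseq_spec (ξ : ℝ) (k : ℕ) : (∃ t : ℤ, (k : ℤ) = nseq ξ k + 1 + 2 * t) ∧
    (k : ℝ) ^ 2 / ξ ^ 2 ≤ nseq ξ k + 1 ∧ (nseq ξ k : ℝ) + 1 < (k : ℝ) ^ 2 / ξ ^ 2 + 2 := by
  unfold nseq
  set c := ⌈((k : ℝ) ^ 2 / ξ ^ 2 + (k : ℝ)) / 2⌉ with hc
  have h1 := Int.le_ceil (((k : ℝ) ^ 2 / ξ ^ 2 + (k : ℝ)) / 2)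
  have h2 := Int.ceil_lt_add_one (((k : ℝ) ^ 2 / ξ ^ 2 + (k : ℝ)) / 2)
  rw [← hc] at h1 h2
  refine ⟨⟨k - c, by ring⟩, ?_, ?_⟩ <;> push_cast <;> linarith

/-- On the parity class of `j`, the threshold `ξ √m ∈ [j - 2, j)` may be replaced by `j - 2`. -/
lemma Pxi_eq (ξ : ℝ) (hξ0 : 0 < ξ) (hξ1 : ξ ≤ 1) (j m : ℕ) (hj : 2 ≤ j)
    (hm : nseq ξ j - 1 = m) : Pxi ξ m = P m (j - 2) := by
  obtain ⟨⟨t, ht⟩, h1, h2⟩ := nseq_spec ξ j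
  have hmR : (nseq ξ j : ℝ) = m + 1 := by
    have : nseq ξ j = m + 1 := by omega
    rw [this]; push_cast; ring
  rw [hmR] at h1 h2
  have hjR : (2 : ℝ) ≤ j := by exact_mod_cast hj
  have hξ2 : 0 < ξ ^ 2 := by positivity
  have hξ2' : ξ ^ 2 ≤ 1 := by nlinarith
  rw [div_le_iff₀ hξ2] at h1
  have h2' : (m : ℝ) * ξ ^ 2 < (j : ℝ) ^ 2 := by
    rw [← lt_div_iff₀ hξ2]; linarith
  have hsq : (ξ * Real.sqrt m) ^ 2 = m * ξ ^ 2 := by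
    rw [mul_pow, Real.sq_sqrt (by positivity)]; ring
  have hn : 0 ≤ ξ * Real.sqrt m := by positivity
  have hup : ξ * Real.sqrt m < j := by
    apply lt_of_pow_lt_pow_left₀ 2 (by positivity); linarith
  have hlo : (j : ℝ) - 2 ≤ ξ * Real.sqrt m := by
    apply le_of_sq_le_sq _ hn
    nlinarith
  apply pr_congr
  intro ε
  obtain ⟨s, hs⟩ := S_parity m ε
  constructor
  · intro h
    have h3 : ((|S m ε| : ℤ) : ℝ) < ((j : ℤ) : ℝ) := by
      push_cast; linarith
    have h4 : |S m ε| < (j : ℤ) := by exact_mod_cast h3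
    rw [abs_lt] at h4
    rw [abs_le]
    omega
  · intro h
    have h3 : ((|S m ε| : ℤ) : ℝ) ≤ (((j : ℤ) - 2 : ℤ) : ℝ) := by exact_mod_cast h
    push_cast at h3
    linarith

lemma step (ξ : ℝ) (hξ0 : 0 < ξ) (hξ1 : ξ ≤ 1) (j : ℕ) (hj : 2 ≤ j) :
    Pxi ξ (nseq ξ j - 1).toNat < Pxi ξ (nseq ξ (j + 1) - 1).toNat := by
  obtain ⟨⟨t, ht⟩, h1, h2⟩ := nseq_spec ξ j
  obtain ⟨⟨t', ht'⟩, h1', h2'⟩ := nseq_spec ξ (j + 1)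
  have hjR : (2 : ℝ) ≤ j := by exact_mod_cast hj
  have hξ2 : 0 < ξ ^ 2 := by positivity
  have hξ2' : ξ ^ 2 ≤ 1 := by nlinarith
  obtain ⟨a, ha⟩ : ∃ a : ℝ, a = 1 / ξ ^ 2 := ⟨_, rfl⟩
  have ha1 : 1 ≤ a := by rw [ha, le_div_iff₀ hξ2]; linarith
  rw [div_eq_mul_one_div, ← ha] at h1 h2 h1' h2'
  push_cast at h1' h2' ht'
  have hM : ((j : ℤ)) ^ 2 ≤ nseq ξ j + 1 := by
    have : (j : ℝ) ^ 2 ≤ nseq ξ j + 1 := by nlinarith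
    exact_mod_cast this
  have hgap : nseq ξ j ≤ nseq ξ (j + 1) := by
    have : (nseq ξ j : ℝ) ≤ nseq ξ (j + 1) := by nlinarith
    exact_mod_cast this
  have hM4 : (4 : ℤ) ≤ nseq ξ j + 1 := by
    have : (2 : ℤ) ≤ j := by exact_mod_cast hj
    nlinarith
  have hkey : (j : ℤ) ^ 2 * nseq ξ (j + 1) < (j + 1) ^ 2 * (nseq ξ j + 1)
      + (j : ℤ) ^ 2 := by
    have hs : 0 < (j : ℝ) ^ 2 := by positivity
    have q1 : (j : ℝ) ^ 2 * (nseq ξ (j + 1) - 1) < (j : ℝ) ^ 2 * (((j : ℝ) + 1) ^ 2 * a) :=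
      mul_lt_mul_of_pos_left (by linarith) hs
    have q2 : ((j : ℝ) + 1) ^ 2 * ((j : ℝ) ^ 2 * a) ≤ ((j : ℝ) + 1) ^ 2 * (nseq ξ j + 1) :=
      mul_le_mul_of_nonneg_left h1 (by positivity)
    have : (j : ℝ) ^ 2 * nseq ξ (j + 1) < (j + 1) ^ 2 * (nseq ξ j + 1) + (j : ℝ) ^ 2 := by
      linarith
    exact_mod_cast this
  -- `m + 2 ≡ j` and `m + 2 L + 3 ≡ j + 1` modulo 2, so the difference of the two indices is odd.
  obtain ⟨m, hm⟩ : ∃ m : ℕ, nseq ξ j - 1 = m := ⟨(nseq ξ j - 1).toNat, by omega⟩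
  obtain ⟨L, hL⟩ : ∃ L : ℕ, nseq ξ (j + 1) - 1 = m + 1 + 2 * L :=
    ⟨((nseq ξ (j + 1) - m - 2) / 2).toNat, by omega⟩
  have e1 : (nseq ξ j - 1).toNat = m := by omega
  have e2 : (nseq ξ (j + 1) - 1).toNat = m + 1 + 2 * L := by omega
  rw [e1, e2, Pxi_eq ξ hξ0 hξ1 j m hj hm,
    Pxi_eq ξ hξ0 hξ1 (j + 1) (m + 1 + 2 * L) (by omega) (by push_cast; omega)]
  have hms : nseq ξ j = m + 1 := by omega
  have hms' : nseq ξ (j + 1) = m + 2 + 2 * L := by omega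
  rw [hms] at hM hkey ht
  rw [hms'] at hkey
  have hlow := P_lower m j (by exact_mod_cast hj) (by linarith) ⟨t + 1, by omega⟩ L
  have hsum := sum_lt_one j (m + 2) L hj (by zify; linarith) ⟨t, by push_cast; omega⟩
    (by push_cast; nlinarith)
  have hpos : 0 < prEq m j := by
    apply prEq_pos
    · omega
    · have : (2 : ℤ) ≤ j := by exact_mod_cast hj
      nlinarith
    · exact ⟨t + 1, by omega⟩
  push_cast at hsum hlow ⊢
  rw [show (j : ℤ) + 1 - 2 = j - 1 by ring]
  have := mul_pos hpos (sub_pos.mpr hsum)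
  linarith

end Rademacher

/-- The sequence `(Qₖ⁻)_{k ≥ 1}` is strictly increasing. -/
theorem stmt_2 (ξ : ℝ) (hξ0 : 0 < ξ) (hξ1 : ξ ≤ 1) (k : ℕ) (hk : 1 ≤ k) :
    Pxi ξ (nseq ξ (k + 1) - 1).toNat < Pxi ξ (nseq ξ (k + 2) - 1).toNat :=
  step ξ hξ0 hξ1 (k + 1) (by omega)
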